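/- Let L be recognized by a parity automaton with costs A over Σ_I × Σ_O with n states and k colors, where Ω(Q) contains both an even and an odd color. If Player O wins Γ_f(L) for some delay function f, then Player O also wins Γ_f(L) for the constant delay function f with f(0) = 2^{2n⁴k²+1}. -/

import Mathlib

attribute [local instance] Classical.propDecidable

noncomputable section

/-- A parity automaton with costs `(Q, A, qI, δ, Ω, Cst)`.
`Cst q a = true` means that the transition `(q, a, δ q a)` is an increment-transition,
`Cst q a = false` means it is an `ε`-transition. -/
structure PACost (Q : Type) (A : Type) where
  qI : Q
  δ : Q → A → Q
  Ω : Q → ℕ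
  Cst : Q → A → Bool

namespace PACost

variable {Q A : Type}

/-- The state reached after processing the first `n` letters of `w` starting in `q0`. -/
def stateAt (M : PACost Q A) (q0 : Q) (w : ℕ → A) : ℕ → Q
  | 0 => q0
  | n + 1 => M.δ (stateAt M q0 w n) (w n)

/-- The cost (number of increment-transitions) of the run infix between positions `m` and `n`. -/
def segCost (M : PACost Q A) (q0 : Q) (w : ℕ → A) (m n : ℕ) : ℕ :=
  ((Finset.Ico m n).filter fun j => M.Cst (stateAt M q0 w j) (w j) = true).card

/-- `Ans c`: the set of even colors of `M` that are larger than `c`. -/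
def Ans (M : PACost Q A) (c : ℕ) : Set ℕ :=
  { c' | (∃ q, M.Ω q = c') ∧ c < c' ∧ Even c' }

/-- The cost-of-response at position `n` of the run of `M` on `w` starting in `q0`. -/
def Cor (M : PACost Q A) (q0 : Q) (w : ℕ → A) (n : ℕ) : ℕ∞ :=
  if Even (M.Ω (stateAt M q0 w n)) then 0
  else
    sInf { c : ℕ∞ | ∃ n', n < n' ∧
      M.Ω (stateAt M q0 w n') ∈ M.Ans (M.Ω (stateAt M q0 w n)) ∧
      c = (segCost M q0 w n n' : ℕ∞) }

/-- The run of `M` on `w` starting in `q0` satisfies the parity condition with costs. -/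
def Accepting (M : PACost Q A) (q0 : Q) (w : ℕ → A) : Prop :=
  Filter.limsup (fun n => Cor M q0 w n) Filter.atTop < ⊤

/-- The language of `M`. -/
def Lang (M : PACost Q A) : Set (ℕ → A) := { w | Accepting M M.qI w }

/-- `M` is a finitary Büchi automaton: every transition is an increment-transition and
all colors are `1` or `2`. -/
def FinBuchi (M : PACost Q A) : Prop :=
  (∀ q a, M.Cst q a = true) ∧ ∀ q, M.Ω q = 1 ∨ M.Ω q = 2

end PACost

/-- The finite segment `w m, w (m+1), …, w (n-1)` of an infinite word `w`. -/
def seg {A : Type} (w : ℕ → A) (m n : ℕ) : List A :=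
  (List.range (n - m)).map fun i => w (m + i)

section DelayGames

variable {I O : Type}

/-- The `n`-th letter of the concatenation `u 0 ++ u 1 ++ u 2 ++ ⋯`
(well-defined whenever all blocks are non-empty). -/
def flatWord [Inhabited I] (u : ℕ → List I) (n : ℕ) : I :=
  (((List.range (n + 1)).map u).flatten).getD n default

/-- A delay function maps every round to a positive number of letters. -/
def DelayFn (f : ℕ → ℕ) : Prop := ∀ i, 0 < f i

/-- The constant delay function `f_k` with `f_k 0 = k + 1` and `f_k i = 1` for `i > 0`. -/
def constDF (k : ℕ) : ℕ → ℕ := fun i => if i = 0 then k + 1 else 1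

/-- The sequence of letters Player I has produced up to (and including) round `i`. -/
def oHist (u : ℕ → List I) (i : ℕ) : List I := ((List.range (i + 1)).map u).flatten

/-- `τO` is a winning strategy for Player O in the delay game with delay function `f`
and winning condition `L`. -/
def OWinning [Inhabited I] (f : ℕ → ℕ) (L : Set (ℕ → I × O)) (τO : List I → O) : Prop :=
  ∀ u : ℕ → List I, ∀ v : ℕ → O,
    (∀ i, (u i).length = f i) →
    (∀ i, v i = τO (oHist u i)) →
    (fun n => (flatWord u n, v n)) ∈ L

/-- Player O wins the delay game `Γ_f(L)`. -/
def OWins [Inhabited I] (f : ℕ → ℕ) (L : Set (ℕ → I × O)) : Prop :=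
  ∃ τO : List I → O, OWinning f L τO

/-- `τI` is a winning strategy for Player I in the delay game with delay function `f`
and winning condition `L`. -/
def IWinning [Inhabited I] (f : ℕ → ℕ) (L : Set (ℕ → I × O)) (τI : List O → List I) : Prop :=
  (∀ w, (τI w).length = f w.length) ∧
  ∀ u : ℕ → List I, ∀ v : ℕ → O,
    (∀ i, u i = τI ((List.range i).map v)) →
    (fun n => (flatWord u n, v n)) ∉ L

/-- Player I wins the delay game `Γ_f(L)`. -/
def IWins [Inhabited I] (f : ℕ → ℕ) (L : Set (ℕ → I × O)) : Prop :=
  ∃ τI : List O → List I, IWinning f L τI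

/-- The cost of a strategy `τO` of Player O: the supremum of the word-costs `wc` of the
outcomes of plays consistent with `τO`. -/
def stratCost [Inhabited I] (wc : (ℕ → I × O) → ℕ∞) (f : ℕ → ℕ) (τO : List I → O) : ℕ∞ :=
  ⨆ (u : ℕ → List I) (v : ℕ → O)
    (_ : (∀ i, (u i).length = f i) ∧ ∀ i, v i = τO (oHist u i)),
    wc (fun n => (flatWord u n, v n))

/-- An optimal winning strategy for Player O in `Γ_f(L)` exists and has cost `c`. -/
def OptimalCostIs [Inhabited I] (L : Set (ℕ → I × O)) (wc : (ℕ → I × O) → ℕ∞)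
    (f : ℕ → ℕ) (c : ℕ∞) : Prop :=
  (∃ τO, OWinning f L τO ∧ stratCost wc f τO = c) ∧
  ∀ τO, OWinning f L τO → c ≤ stratCost wc f τO

end DelayGames


/-! Whether a run is accepting can be read off from finite summaries of the blocks into which it
is cut: the state reached, the largest answer, the largest open request, and whether an increment
occurs. Counting the blocks with an increment underestimates the cost, by a bounded factor if the
blocks have bounded length. So acceptance passes from any cut run to one whose blocks have the same
summaries and bounded length.

The *profile* of a block of input letters records which summaries its completions by output letters
can achieve from which states. There are only finitely many profiles, `d` say, and they are computed
by a finite automaton, so a block of `d` input letters can be pumped to an arbitrarily long one with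
the same profile.

Given a winning strategy with some lookahead, Player O cuts the input into blocks of length `d` and
plays that strategy on the pumped blocks, each of which is so long that it provides the whole
lookahead needed during the preceding one. Knowing two blocks, she thus knows the summary of the
first pumped one and, the profiles being equal, has a completion of the actual block with the same
summary. Hence a lookahead of `2 * d` suffices. As there are `2 * n * (k + 1) ^ 2` summaries,
`d = 2 ^ (2 * n ^ 2 * (k + 1) ^ 2)`.
-/

section Words

variable {A B : Type}

@[simp]
theorem length_seg (w : ℕ → A) (m n : ℕ) : (seg w m n).length = n - m := by
  simp [seg]

@[simp]
theorem getElem_seg (w : ℕ → A) (m n : ℕ) {i : ℕ} (hi : i < (seg w m n).length) :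
    (seg w m n)[i] = w (m + i) := by
  simp [seg]

@[simp]
theorem seg_self (w : ℕ → A) (m : ℕ) : seg w m m = [] := by
  simp [seg]

theorem map_seg (g : A → B) (w : ℕ → A) (m n : ℕ) : (seg w m n).map g = seg (g ∘ w) m n := by
  simp [seg]

theorem seg_succ (w : ℕ → A) {m n : ℕ} (h : m ≤ n) : seg w m (n + 1) = seg w m n ++ [w n] := by
  simp [seg, Nat.succ_sub h, List.range_succ, Nat.add_sub_cancel' h]

theorem seg_append_seg (w : ℕ → A) {l m n : ℕ} (hlm : l ≤ m) (hmn : m ≤ n) :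
    seg w l m ++ seg w m n = seg w l n := by
  induction n, hmn using Nat.le_induction with
  | base => simp
  | succ n hmn ih => rw [seg_succ w hmn, seg_succ w (hlm.trans hmn), ← ih, List.append_assoc]

theorem seg_eq_seg_iff {w w' : ℕ → A} {m n : ℕ} :
    seg w m n = seg w' m n ↔ Set.EqOn w w' (Set.Ico m n) := by
  refine ⟨fun h j hj => ?_, fun h => List.ext_getElem (by simp) fun i hi _ => ?_⟩
  · have hlt : j - m < n - m := Nat.sub_lt_sub_right hj.1 hj.2
    have hget := congrArg (fun x => x[j - m]?) h
    simpa [seg, hlt, Nat.add_sub_cancel' hj.1] using hget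
  · rw [length_seg] at hi
    simpa using h ⟨Nat.le_add_right m i, by omega⟩

/-- The concatenation `u 0 ++ ⋯ ++ u (i - 1)` of the first `i` blocks. -/
def blockPrefix (u : ℕ → List A) (i : ℕ) : List A := ((List.range i).map u).flatten

/-- The position at which the block `u i` starts in the concatenation `u 0 ++ u 1 ++ ⋯`. -/
def blockStart (u : ℕ → List A) (i : ℕ) : ℕ := ∑ j ∈ Finset.range i, (u j).length

theorem blockPrefix_succ (u : ℕ → List A) (i : ℕ) :
    blockPrefix u (i + 1) = blockPrefix u i ++ u i := by
  simp [blockPrefix, List.range_succ]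

theorem blockStart_succ (u : ℕ → List A) (i : ℕ) :
    blockStart u (i + 1) = blockStart u i + (u i).length :=
  Finset.sum_range_succ _ _

theorem length_blockPrefix (u : ℕ → List A) (i : ℕ) :
    (blockPrefix u i).length = blockStart u i := by
  induction i with
  | zero => rfl
  | succ i ih => rw [blockPrefix_succ, List.length_append, ih, blockStart_succ]

theorem strictMono_blockStart {u : ℕ → List A} (hu : ∀ i, 0 < (u i).length) :
    StrictMono (blockStart u) :=
  strictMono_nat_of_lt_succ fun i => by
    rw [blockStart_succ]
    exact Nat.lt_add_of_pos_right (hu i)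

theorem blockPrefix_isPrefix (u : ℕ → List A) {i j : ℕ} (h : i ≤ j) :
    blockPrefix u i <+: blockPrefix u j := by
  induction j, h using Nat.le_induction with
  | base => exact List.prefix_rfl
  | succ j _ ih =>
    rw [blockPrefix_succ]
    exact ih.trans (List.prefix_append _ _)

theorem blockPrefix_seg {B : ℕ → ℕ} (hB : Monotone B) (h0 : B 0 = 0) (w : ℕ → A) (i : ℕ) :
    blockPrefix (fun j => seg w (B j) (B (j + 1))) i = seg w 0 (B i) := by
  induction i with
  | zero => simp [blockPrefix, h0]
  | succ i ih => rw [blockPrefix_succ, ih, seg_append_seg w (Nat.zero_le _) (hB i.le_succ)]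

variable [Inhabited A] {u u' : ℕ → List A}

theorem flatWord_seg {B : ℕ → ℕ} (hB : StrictMono B) (h0 : B 0 = 0) (w : ℕ → A) :
    flatWord (fun i => seg w (B i) (B (i + 1))) = w := by
  funext n
  have hn : n < B (n + 1) := hB.id_le (n + 1)
  change (blockPrefix _ (n + 1)).getD n default = w n
  rw [blockPrefix_seg hB.monotone h0, List.getD_eq_getElem _ _ (by simpa using hn)]
  simp

theorem seg_flatWord_zero (hu : ∀ i, 0 < (u i).length) (i : ℕ) :
    seg (flatWord u) 0 (blockStart u i) = blockPrefix u i := by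
  refine List.ext_getElem (by simp [length_blockPrefix]) fun n _ hn => ?_
  have hn' : n < (blockPrefix u (n + 1)).length := by
    rw [length_blockPrefix]
    exact (strictMono_blockStart hu).id_le (n + 1)
  rw [getElem_seg, zero_add]
  change (blockPrefix u (n + 1)).getD n default = _
  rw [List.getD_eq_getElem _ _ hn']
  rcases le_total i (n + 1) with h | h
  · exact ((blockPrefix_isPrefix u h).getElem hn).symm
  · exact (blockPrefix_isPrefix u h).getElem hn'

theorem seg_flatWord (hu : ∀ i, 0 < (u i).length) (i : ℕ) :
    seg (flatWord u) (blockStart u i) (blockStart u (i + 1)) = u i := by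
  have hle : blockStart u i ≤ blockStart u (i + 1) := (strictMono_blockStart hu).monotone i.le_succ
  have happend := seg_append_seg (flatWord u) (Nat.zero_le _) hle
  rw [seg_flatWord_zero hu, seg_flatWord_zero hu, blockPrefix_succ] at happend
  exact List.append_cancel_left happend

theorem eqOn_flatWord (hu : ∀ i, 0 < (u i).length) (hu' : ∀ i, 0 < (u' i).length) {i : ℕ}
    (h : ∀ j < i, u j = u' j) :
    Set.EqOn (flatWord u) (flatWord u') (Set.Iio (blockStart u i)) := by
  have hstart : blockStart u i = blockStart u' i :=
    Finset.sum_congr rfl fun j hj => by rw [h j (Finset.mem_range.1 hj)]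
  have hpre : blockPrefix u i = blockPrefix u' i :=
    congrArg List.flatten (List.map_congr_left fun j hj => h j (List.mem_range.1 hj))
  have hseg : seg (flatWord u) 0 (blockStart u i) = seg (flatWord u') 0 (blockStart u i) := by
    rw [seg_flatWord_zero hu, hpre, ← seg_flatWord_zero hu', hstart]
  exact fun _ hn => seg_eq_seg_iff.1 hseg ⟨Nat.zero_le _, hn⟩

end Words

section Lookahead

variable {I O : Type}

/-- The number of letters of Player I that Player O has seen when she picks her `n`-th letter in a
delay game with delay function `f`. -/
def lookahead (f : ℕ → ℕ) (n : ℕ) : ℕ := ∑ j ∈ Finset.range (n + 1), f j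

/-- A map on infinite words whose `n`-th output letter depends only on the first `F n` input
letters. -/
def IsCausal (F : ℕ → ℕ) (σ : (ℕ → I) → ℕ → O) : Prop :=
  ∀ ⦃α α' : ℕ → I⦄ ⦃n : ℕ⦄, Set.EqOn α α' (Set.Iio (F n)) → σ α n = σ α' n

theorem strictMono_sum_range {f : ℕ → ℕ} (hf : DelayFn f) :
    StrictMono fun i => ∑ j ∈ Finset.range i, f j :=
  strictMono_nat_of_lt_succ fun i => by
    rw [Finset.sum_range_succ]
    exact Nat.lt_add_of_pos_right (hf i)

theorem strictMono_lookahead {f : ℕ → ℕ} (hf : DelayFn f) : StrictMono (lookahead f) :=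
  fun _ _ h => strictMono_sum_range hf (Nat.succ_lt_succ h)

variable [Inhabited I] {f : ℕ → ℕ} {L : Set (ℕ → I × O)}

theorem exists_isCausal_of_oWins (hf : DelayFn f) (h : OWins f L) :
    ∃ σ : (ℕ → I) → ℕ → O, IsCausal (lookahead f) σ ∧ ∀ α, (fun n => (α n, σ α n)) ∈ L := by
  obtain ⟨τ, hτ⟩ := h
  refine ⟨fun α n => τ (seg α 0 (lookahead f n)), fun α α' n hα => ?_, fun α => ?_⟩
  · exact congrArg τ (seg_eq_seg_iff.2 (hα.mono fun _ hj => hj.2))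
  · have hS := strictMono_sum_range hf
    have hplay := hτ (fun i => seg α (∑ j ∈ Finset.range i, f j) (∑ j ∈ Finset.range (i + 1), f j))
      (fun n => τ (seg α 0 (lookahead f n)))
      (fun i => by simp [Finset.sum_range_succ])
      (fun i => congrArg τ (blockPrefix_seg hS.monotone rfl α (i + 1)).symm)
    rwa [flatWord_seg hS rfl] at hplay

theorem oWins_of_isCausal (hf : DelayFn f) {σ : (ℕ → I) → ℕ → O} (hσ : IsCausal (lookahead f) σ)
    (h : ∀ α, (fun n => (α n, σ α n)) ∈ L) : OWins f L := by
  refine ⟨fun x => σ (fun m => x.getD m default) (Function.invFun (lookahead f) x.length),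
    fun u v hu hv => ?_⟩
  have hpos : ∀ i, 0 < (u i).length := fun i => hu i ▸ hf i
  have hstart (n : ℕ) : blockStart u (n + 1) = lookahead f n :=
    Finset.sum_congr rfl fun j _ => hu j
  have hhist (n : ℕ) : oHist u n = seg (flatWord u) 0 (lookahead f n) :=
    hstart n ▸ (seg_flatWord_zero hpos (n + 1)).symm
  have hv' : v = σ (flatWord u) := by
    funext n
    simp only [hv n, hhist n]
    rw [length_seg, Nat.sub_zero, Function.leftInverse_invFun (strictMono_lookahead hf).injective n]
    refine hσ fun m hm => ?_
    simp only [Set.mem_Iio] at hm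
    rw [List.getD_eq_getElem _ _ (by simpa using hm), getElem_seg, zero_add]
  exact hv' ▸ h (flatWord u)

end Lookahead

theorem sq_mul_succ_sq_le {n k : ℕ} (hn : 2 ≤ n) (hk : 1 ≤ k) :
    n ^ 2 * (k + 1) ^ 2 ≤ n ^ 4 * k ^ 2 := by
  have hle : k + 1 ≤ n * k := by nlinarith
  calc n ^ 2 * (k + 1) ^ 2 ≤ n ^ 2 * (n * k) ^ 2 := by gcongr
    _ = n ^ 4 * k ^ 2 := by ring

theorem exists_mem_Ico_succ {B : ℕ → ℕ} (hB : StrictMono B) (h0 : B 0 = 0) (p : ℕ) :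
    ∃ i, p ∈ Set.Ico (B i) (B (i + 1)) := by
  have hcover := iUnion_Ico_map_succ_eq_Ici
    (fun i => by simp [h0]) hB.not_bddAbove_range_of_isSuccArchimedean
  have hp : p ∈ Set.Ici (B ⊥) := by simp [h0]
  rw [← hcover] at hp
  exact Set.mem_iUnion.1 hp

theorem exists_le_length_eval_eq {A S : Type} [Fintype S] (D : DFA A S) {x : List A}
    (hx : Fintype.card S ≤ x.length) (N : ℕ) : ∃ x', N ≤ x'.length ∧ D.eval x' = D.eval x := by
  suffices ∃ x', Fintype.card S + N ≤ x'.length ∧ D.eval x' = D.eval x from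
    this.imp fun _ => And.imp_left (Nat.le_add_left ..).trans
  induction N with
  | zero => exact ⟨x, hx, rfl⟩
  | succ N ih =>
    obtain ⟨x', hx', heval⟩ := ih
    obtain ⟨_, a, b, c, rfl, -, hb, rfl, hloop, hc⟩ :=
      D.evalFrom_split (s := D.start) ((Nat.le_add_right _ N).trans hx') rfl
    refine ⟨a ++ b ++ b ++ c, ?_, ?_⟩
    · have hpos : 0 < b.length := List.length_pos_of_ne_nil hb
      simp only [List.length_append] at hx' ⊢
      omega
    · rw [← heval, DFA.eval, DFA.evalFrom_of_append, DFA.evalFrom_of_append, DFA.evalFrom_of_append,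
        hloop, hloop]
      exact hc

namespace PACost

variable {Q A : Type} (M : PACost Q A)

/-- The colors that occur in `M`, as a finite linear order. -/
abbrev Color : Type := Set.range M.Ω

/-- The color of a state, as an element of `M.Color`. -/
def color (q : Q) : M.Color := Set.rangeFactorization M.Ω q

/-- What the parity condition with costs needs to know about a finite run: the state it ends in, the
largest even color and the largest odd color left unanswered among its states, and whether it
contains an increment-transition. The last state of the run does not contribute to `answer` and
`request`, so that consecutive runs do not overlap; `⊥` stands for the absence of a color. -/
structure Summary where
  state : Q
  answer : WithBot M.Color
  request : WithBot M.Color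
  increment : Bool

namespace Summary

variable {M}

/-- The summary of the empty run from `q`. -/
def init (q : Q) : M.Summary := ⟨q, ⊥, ⊥, false⟩

/-- The summary of a run with summary `s` extended by the letter `a`. -/
def step (s : M.Summary) (a : A) : M.Summary where
  state := M.δ s.state a
  answer := if Even (M.Ω s.state) then max s.answer (M.color s.state) else s.answer
  request :=
    if Even (M.Ω s.state) then if s.request < M.color s.state then ⊥ else s.request
    else max s.request (M.color s.state)
  increment := s.increment || M.Cst s.state a

end Summary

/-- The summary of the run of `M` on the finite word `x` from `q`. -/
def summarize (q : Q) (x : List A) : M.Summary := x.foldl Summary.step (Summary.init q)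

/-- The summary of the run of `M` on `w` from `q`, restricted to the positions from `m` to `n`. -/
def segSummary (q : Q) (w : ℕ → A) (m n : ℕ) : M.Summary :=
  M.summarize (M.stateAt q w m) (seg w m n)

theorem summarize_append_singleton (q : Q) (x : List A) (a : A) :
    M.summarize q (x ++ [a]) = (M.summarize q x).step a := by
  simp [summarize]

variable {M} {q : Q} {w w' : ℕ → A} {m n : ℕ}

theorem stateAt_congr (h : Set.EqOn w w' (Set.Iio n)) : M.stateAt q w n = M.stateAt q w' n := by
  induction n with
  | zero => rfl
  | succ n ih =>
    rw [stateAt, stateAt, ih (h.mono (Set.Iio_subset_Iio n.le_succ)),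
      h (Set.mem_Iio.2 n.lt_succ_self)]

theorem segSummary_congr (hm : m ≤ n) (h : Set.EqOn w w' (Set.Iio n)) :
    M.segSummary q w m n = M.segSummary q w' m n := by
  rw [segSummary, segSummary, stateAt_congr (h.mono (Set.Iio_subset_Iio hm)),
    seg_eq_seg_iff.2 (h.mono Set.Ico_subset_Iio_self)]

theorem segSummary_self : M.segSummary q w m m = Summary.init (M.stateAt q w m) := by
  simp [segSummary, summarize]

theorem segSummary_succ (h : m ≤ n) :
    M.segSummary q w m (n + 1) = (M.segSummary q w m n).step (w n) := by
  rw [segSummary, seg_succ w h, summarize_append_singleton, segSummary]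

theorem state_segSummary (h : m ≤ n) : (M.segSummary q w m n).state = M.stateAt q w n := by
  induction n, h using Nat.le_induction with
  | base => rw [segSummary_self, Summary.init]
  | succ n h ih => rw [segSummary_succ h, Summary.step, ih, stateAt]

theorem le_answer_segSummary_iff (h : m ≤ n) (c : M.Color) :
    c ≤ (M.segSummary q w m n).answer ↔
      ∃ p ∈ Set.Ico m n, Even (M.Ω (M.stateAt q w p)) ∧ c ≤ M.color (M.stateAt q w p) := by
  induction n, h using Nat.le_induction with
  | base => simp [segSummary_self, Summary.init]
  | succ n h ih =>
    simp only [segSummary_succ h, Summary.step, state_segSummary h,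
      ← Set.insert_Ico_right_eq_Ico_add_one h, Set.exists_mem_insert]
    split_ifs with heven
    · simp [ih, heven, or_comm]
    · simp [ih, heven]

/-- Position `p` of the run of `M` on `w` from `q` has an odd color that is not answered at a
position before `n`. -/
def IsOpenRequest (M : PACost Q A) (q : Q) (w : ℕ → A) (n p : ℕ) : Prop :=
  ¬ Even (M.Ω (M.stateAt q w p)) ∧ ∀ p' ∈ Set.Ioo p n, Even (M.Ω (M.stateAt q w p')) →
    M.color (M.stateAt q w p') ≤ M.color (M.stateAt q w p)

theorem isOpenRequest_succ_self :
    M.IsOpenRequest q w (n + 1) n ↔ ¬ Even (M.Ω (M.stateAt q w n)) := by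
  rw [IsOpenRequest, and_iff_left]
  rintro p' ⟨hn, hn'⟩
  omega

theorem isOpenRequest_succ {p : ℕ} (hp : p < n) :
    M.IsOpenRequest q w (n + 1) p ↔ M.IsOpenRequest q w n p ∧
      (Even (M.Ω (M.stateAt q w n)) → M.color (M.stateAt q w n) ≤ M.color (M.stateAt q w p)) := by
  have hIoo : Set.Ioo p (n + 1) = insert n (Set.Ioo p n) := by
    ext j
    simp only [Set.mem_Ioo, Set.mem_insert_iff]
    omega
  rw [IsOpenRequest, IsOpenRequest, hIoo, Set.forall_mem_insert, and_comm (b := ∀ p' ∈ _, _),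
    and_assoc]

theorem le_request_segSummary_iff (h : m ≤ n) (c : M.Color) :
    c ≤ (M.segSummary q w m n).request ↔
      ∃ p ∈ Set.Ico m n, M.IsOpenRequest q w n p ∧ c ≤ M.color (M.stateAt q w p) := by
  induction n, h using Nat.le_induction generalizing c with
  | base => simp [segSummary_self, Summary.init]
  | succ n h ih =>
    set e := M.color (M.stateAt q w n) with he
    have hsplit : (∃ p ∈ Set.Ico m (n + 1), M.IsOpenRequest q w (n + 1) p ∧
          c ≤ M.color (M.stateAt q w p)) ↔
        (¬ Even (M.Ω (M.stateAt q w n)) ∧ c ≤ e) ∨ ∃ p ∈ Set.Ico m n, (M.IsOpenRequest q w n p ∧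
          (Even (M.Ω (M.stateAt q w n)) → e ≤ M.color (M.stateAt q w p))) ∧
          c ≤ M.color (M.stateAt q w p) := by
      rw [← Set.insert_Ico_right_eq_Ico_add_one h, Set.exists_mem_insert, isOpenRequest_succ_self]
      refine or_congr_right (exists_congr fun p => and_congr_right fun hp => ?_)
      rw [isOpenRequest_succ hp.2]
    rw [hsplit, segSummary_succ h, Summary.step, state_segSummary h, ← he]
    by_cases heven : Even (M.Ω (M.stateAt q w n))
    · have hmax : (e ≤ (M.segSummary q w m n).request ∧ c ≤ (M.segSummary q w m n).request) ↔
          ∃ p ∈ Set.Ico m n, (M.IsOpenRequest q w n p ∧ e ≤ M.color (M.stateAt q w p)) ∧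
            c ≤ M.color (M.stateAt q w p) := by
        simpa only [WithBot.coe_max, max_le_iff, and_assoc] using ih (max e c)
      simp only [heven, if_true, not_true_eq_false, false_and, false_or, true_imp_iff, ← hmax]
      split_ifs with hlt
      · simp [hlt.not_ge]
      · simp [not_lt.1 hlt]
    · simp [heven, ih, or_comm]

theorem segCost_succ (h : m ≤ n) : M.segCost q w m (n + 1) =
    M.segCost q w m n + if M.Cst (M.stateAt q w n) (w n) then 1 else 0 := by
  simp only [segCost, Finset.card_filter, Finset.sum_Ico_succ_top h]

theorem segCost_add_segCost {l : ℕ} (hlm : l ≤ m) (hmn : m ≤ n) :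
    M.segCost q w l m + M.segCost q w m n = M.segCost q w l n := by
  simp only [segCost, Finset.card_filter, Finset.sum_Ico_consecutive _ hlm hmn]

theorem segCost_mono {m' n' : ℕ} (hm : m' ≤ m) (hn : n ≤ n') :
    M.segCost q w m n ≤ M.segCost q w m' n' :=
  Finset.card_le_card (Finset.filter_subset_filter _ (Finset.Ico_subset_Ico hm hn))

theorem segCost_le (M : PACost Q A) (q : Q) (w : ℕ → A) (m n : ℕ) : M.segCost q w m n ≤ n - m :=
  (Finset.card_filter_le _ _).trans (Nat.card_Ico m n).le

theorem increment_segSummary_iff (h : m ≤ n) :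
    (M.segSummary q w m n).increment ↔ 0 < M.segCost q w m n := by
  induction n, h using Nat.le_induction with
  | base => simp [segSummary_self, Summary.init, segCost]
  | succ n h ih =>
    rw [segSummary_succ h, Summary.step, state_segSummary h, segCost_succ h, Bool.or_eq_true, ih]
    split_ifs with hc <;> simp [hc]

theorem cor_le_iff (b p : ℕ) : M.Cor q w p ≤ b ↔ (¬ Even (M.Ω (M.stateAt q w p)) →
    ∃ p' > p, Even (M.Ω (M.stateAt q w p')) ∧
      M.color (M.stateAt q w p) < M.color (M.stateAt q w p') ∧ M.segCost q w p p' ≤ b) := by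
  rw [Cor]
  split_ifs with heven
  · simp [heven]
  · rw [← ENat.lt_add_one_iff (ENat.natCast_ne_top b), sInf_lt_iff]
    simp only [heven, not_false_eq_true, true_imp_iff]
    constructor
    · rintro ⟨_, ⟨p', hp', ⟨-, hlt, heven'⟩, rfl⟩, hb⟩
      exact ⟨p', hp', heven', hlt, Nat.lt_succ_iff.1 (by exact_mod_cast hb)⟩
    · rintro ⟨p', hp', heven', hlt, hb⟩
      exact ⟨_, ⟨p', hp', ⟨⟨_, rfl⟩, hlt, heven'⟩, rfl⟩, by exact_mod_cast Nat.lt_succ_of_le hb⟩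

theorem accepting_iff_exists_cor_le :
    M.Accepting q w ↔ ∃ b N : ℕ, ∀ p ≥ N, M.Cor q w p ≤ b := by
  simp only [Accepting, ← Filter.eventually_atTop]
  constructor
  · intro h
    lift Filter.limsup (fun p => M.Cor q w p) Filter.atTop to ℕ using h.ne with b hb
    have hlt : Filter.limsup (fun p => M.Cor q w p) Filter.atTop < (b + 1 : ℕ) := by
      rw [← hb]
      exact_mod_cast b.lt_succ_self
    refine ⟨b, (Filter.eventually_lt_of_limsup_lt hlt).mono fun p hp => ?_⟩
    exact (ENat.lt_add_one_iff (ENat.natCast_ne_top b)).1 (by exact_mod_cast hp)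
  · rintro ⟨b, hb⟩
    exact (Filter.limsup_le_of_le (h := hb)).trans_lt (ENat.natCast_lt_top b)

/-- The summaries of the blocks into which the positions `B 0 < B 1 < ⋯` cut the run of `M` on `w`
from `q`. -/
def blockSummary (M : PACost Q A) (q : Q) (w : ℕ → A) (B : ℕ → ℕ) (i : ℕ) : M.Summary :=
  M.segSummary q w (B i) (B (i + 1))

/-- The parity condition with costs, read off the summaries of consecutive blocks: only the largest
request left open by a block has to be answered, and the cost of a response is the number of blocks
with an increment strictly between the one posing and the one answering the request. -/
def BlockAccepting (s : ℕ → M.Summary) : Prop :=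
  ∃ b N : ℕ, ∀ i ≥ N, (s i).request ≠ ⊥ → ∃ j > i, (s i).request < (s j).answer ∧
    ((Finset.Ico (i + 1) j).filter fun l => (s l).increment).card ≤ b

variable {B : ℕ → ℕ} {i j : ℕ}

theorem card_increment_le_segCost (hB : Monotone B) (hij : i ≤ j) :
    ((Finset.Ico i j).filter fun l => (M.blockSummary q w B l).increment).card ≤
      M.segCost q w (B i) (B j) := by
  induction j, hij using Nat.le_induction with
  | base => simp
  | succ j hij ih =>
    rw [Finset.card_filter, Finset.sum_Ico_succ_top hij, ← Finset.card_filter,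
      ← segCost_add_segCost (hB hij) (hB j.le_succ)]
    refine add_le_add ih ?_
    split_ifs with hinc
    · exact (increment_segSummary_iff (hB j.le_succ)).1 hinc
    · exact Nat.zero_le _

theorem segCost_le_mul_card_increment (hB : Monotone B) {d : ℕ} (hd : ∀ l, B (l + 1) ≤ B l + d)
    (hij : i ≤ j) : M.segCost q w (B i) (B j) ≤
      d * ((Finset.Ico i j).filter fun l => (M.blockSummary q w B l).increment).card := by
  induction j, hij using Nat.le_induction with
  | base => simp [segCost]
  | succ j hij ih =>
    have hle : B j ≤ B (j + 1) := hB j.le_succ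
    rw [Finset.card_filter, Finset.sum_Ico_succ_top hij, ← Finset.card_filter, mul_add,
      ← segCost_add_segCost (hB hij) hle]
    refine add_le_add ih ?_
    split_ifs with hinc
    · rw [mul_one]
      exact (segCost_le M q w _ _).trans (Nat.sub_le_iff_le_add'.2 (hd j))
    · rw [mul_zero]
      exact not_lt.1 (mt (increment_segSummary_iff hle).2 hinc)

theorem blockAccepting_of_accepting (hB : StrictMono B) (h0 : B 0 = 0) (h : M.Accepting q w) :
    BlockAccepting (M.blockSummary q w B) := by
  simp only [accepting_iff_exists_cor_le, cor_le_iff] at h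
  obtain ⟨b, N, h⟩ := h
  refine ⟨b, N, fun i hi hrequest => ?_⟩
  have hle (l : ℕ) : B l ≤ B (l + 1) := (hB l.lt_succ_self).le
  obtain ⟨c, hc⟩ := WithBot.ne_bot_iff_exists.1 hrequest
  obtain ⟨p, hp, ⟨hodd, hopen⟩, hcp⟩ := (le_request_segSummary_iff (hle i) c).1 hc.le
  obtain ⟨p', hpp', heven, hlt, hcost⟩ := h p (hi.trans ((hB.id_le i).trans hp.1)) hodd
  have hp' : B (i + 1) ≤ p' := by
    by_contra! hp'
    exact (hopen p' ⟨hpp', hp'⟩ heven).not_gt hlt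
  obtain ⟨j, hj⟩ := exists_mem_Ico_succ hB h0 p'
  have hij : i < j := Nat.lt_of_succ_lt_succ (hB.lt_iff_lt.1 (hp'.trans_lt hj.2))
  have hanswer := (le_answer_segSummary_iff (hle j) _).2 ⟨p', hj, heven, le_rfl⟩
  refine ⟨j, hij, ?_, ?_⟩
  · exact hc ▸ (WithBot.coe_lt_coe.2 (hcp.trans_lt hlt)).trans_le hanswer
  · calc ((Finset.Ico (i + 1) j).filter fun l => (M.blockSummary q w B l).increment).card
      _ ≤ M.segCost q w (B (i + 1)) (B j) := card_increment_le_segCost hB.monotone hij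
      _ ≤ M.segCost q w p p' := segCost_mono hp.2.le hj.1
      _ ≤ b := hcost

theorem accepting_of_blockAccepting (hB : StrictMono B) (h0 : B 0 = 0) {d : ℕ}
    (hd : ∀ l, B (l + 1) ≤ B l + d) (h : BlockAccepting (M.blockSummary q w B)) :
    M.Accepting q w := by
  simp only [accepting_iff_exists_cor_le, cor_le_iff]
  obtain ⟨b, N, h⟩ := h
  refine ⟨d + d * b + d, B N, fun p hNp hodd => ?_⟩
  have hle (l : ℕ) : B l ≤ B (l + 1) := (hB l.lt_succ_self).le
  have hblock (l : ℕ) : M.segCost q w (B l) (B (l + 1)) ≤ d :=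
    (segCost_le M q w _ _).trans (Nat.sub_le_iff_le_add'.2 (hd l))
  obtain ⟨i, hi⟩ := exists_mem_Ico_succ hB h0 p
  by_cases hopen : M.IsOpenRequest q w (B (i + 1)) p
  · have hrequest := (le_request_segSummary_iff (hle i) _).2 ⟨p, hi, hopen, le_rfl⟩
    have hNi : N ≤ i := Nat.lt_succ_iff.1 (hB.lt_iff_lt.1 (hNp.trans_lt hi.2))
    obtain ⟨j, hij, hlt, hcard⟩ := h i hNi ((WithBot.bot_lt_coe _).trans_le hrequest).ne'
    obtain ⟨c, hc⟩ := WithBot.ne_bot_iff_exists.1 (bot_le.trans_lt hlt).ne'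
    obtain ⟨p', hp', heven, hcp'⟩ := (le_answer_segSummary_iff (hle j) c).1 hc.le
    have hlt' : M.color (M.stateAt q w p) < M.color (M.stateAt q w p') :=
      (WithBot.coe_lt_coe.1 (hc ▸ hrequest.trans_lt hlt)).trans_le hcp'
    have hiBj : B (i + 1) ≤ B j := hB.monotone hij
    refine ⟨p', hi.2.trans_le (hiBj.trans hp'.1), heven, hlt', ?_⟩
    calc M.segCost q w p p' ≤ M.segCost q w (B i) (B (j + 1)) := segCost_mono hi.1 hp'.2.le
      _ = M.segCost q w (B i) (B (i + 1)) + M.segCost q w (B (i + 1)) (B j) +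
          M.segCost q w (B j) (B (j + 1)) := by
        rw [segCost_add_segCost (hle i) hiBj, segCost_add_segCost ((hle i).trans hiBj) (hle j)]
      _ ≤ d + d * b + d := by
        gcongr
        · exact hblock i
        · exact (segCost_le_mul_card_increment hB.monotone hd hij).trans (by gcongr)
        · exact hblock j
  · obtain ⟨p', hp', heven, hlt⟩ : ∃ p' ∈ Set.Ioo p (B (i + 1)),
        Even (M.Ω (M.stateAt q w p')) ∧
          M.color (M.stateAt q w p) < M.color (M.stateAt q w p') := by
      simpa [IsOpenRequest, hodd, and_assoc] using hopen
    refine ⟨p', hp'.1, heven, hlt, (segCost_mono hi.1 hp'.2.le).trans ((hblock i).trans ?_)⟩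
    exact Nat.le_add_left d (d + d * b)

theorem accepting_of_blockwise_summary_eq {B' : ℕ → ℕ} (hB : StrictMono B) (h0 : B 0 = 0)
    (hB' : StrictMono B') (h0' : B' 0 = 0) {d : ℕ} (hd : ∀ i, B' (i + 1) ≤ B' i + d)
    (heq : ∀ i, M.summarize (M.stateAt q w (B i)) (seg w' (B' i) (B' (i + 1))) =
      M.blockSummary q w B i)
    (h : M.Accepting q w) : M.Accepting q w' := by
  have hstate (i : ℕ) : M.stateAt q w' (B' i) = M.stateAt q w (B i) := by
    induction i with
    | zero => rw [h0, h0', stateAt, stateAt]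
    | succ i ih =>
      rw [← state_segSummary (hB' i.lt_succ_self).le, segSummary, ih, heq, blockSummary,
        state_segSummary (hB i.lt_succ_self).le]
  have hsummary : M.blockSummary q w' B' = M.blockSummary q w B := by
    funext i
    rw [← heq, ← hstate, blockSummary, segSummary]
  exact accepting_of_blockAccepting hB' h0' hd (hsummary ▸ blockAccepting_of_accepting hB h0 h)

namespace Summary

variable (M)

/-- The fields of a summary as a tuple, for counting summaries. -/
def equivProd : M.Summary ≃ Q × WithBot M.Color × WithBot M.Color × Bool where
  toFun s := (s.state, s.answer, s.request, s.increment)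
  invFun t := ⟨t.1, t.2.1, t.2.2.1, t.2.2.2⟩

instance [Fintype Q] : Fintype M.Summary := Fintype.ofEquiv _ (equivProd M).symm

end Summary

section Profile

variable {I O : Type} (M : PACost Q (I × O))

/-- A possible profile of a word over the input alphabet: from which states its completions by
output letters achieve which summaries. -/
abbrev Profile : Type := Q → Set M.Summary

/-- The automaton computing the profile of an input word by a subset construction. Its accepting
states play no role. -/
def profileDFA : DFA I M.Profile where
  step t a := fun q => {s | ∃ s' ∈ t q, ∃ b, s'.step (a, b) = s}
  start := fun q => {Summary.init q}
  accept := ∅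

/-- The profile of an input word. -/
def profile (x : List I) : M.Profile := M.profileDFA.eval x

variable {M}

theorem mem_profile_iff {x : List I} {q : Q} {s : M.Summary} :
    s ∈ M.profile x q ↔ ∃ z : List (I × O), z.map Prod.fst = x ∧ M.summarize q z = s := by
  induction x using List.reverseRecOn generalizing s with
  | nil =>
    simp only [List.map_eq_nil_iff, exists_eq_left]
    exact eq_comm
  | append_singleton x a ih =>
    have hstep : s ∈ M.profile (x ++ [a]) q ↔
        ∃ s' ∈ M.profile x q, ∃ b, s'.step (a, b) = s := by
      rw [profile, DFA.eval_append_singleton]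
      rfl
    simp only [hstep, ih]
    constructor
    · rintro ⟨_, ⟨z, rfl, rfl⟩, b, rfl⟩
      exact ⟨z ++ [(a, b)], by simp, summarize_append_singleton M q z (a, b)⟩
    · rintro ⟨z, hz, rfl⟩
      obtain ⟨z, y, rfl, rfl, hy⟩ := List.map_eq_append_iff.1 hz
      obtain ⟨⟨a, b⟩, rfl, rfl⟩ := List.map_eq_singleton_iff.1 hy
      exact ⟨_, ⟨z, rfl, rfl⟩, b, (summarize_append_singleton M q z (a, b)).symm⟩

theorem card_profile [Fintype Q] : Fintype.card M.Profile =
    2 ^ (2 * Fintype.card Q ^ 2 * ((Finset.univ.image M.Ω).card + 1) ^ 2) := by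
  have hcolor : Fintype.card M.Color = (Finset.univ.image M.Ω).card := by
    rw [← Set.toFinset_range, Set.toFinset_card]
  have hoption : Fintype.card (WithBot M.Color) = Fintype.card M.Color + 1 := Fintype.card_option
  have hsummary : Fintype.card M.Summary =
      Fintype.card Q * ((Fintype.card M.Color + 1) * ((Fintype.card M.Color + 1) * 2)) := by
    rw [Fintype.card_congr (Summary.equivProd M), Fintype.card_prod, Fintype.card_prod,
      Fintype.card_prod, hoption, Fintype.card_bool]
  rw [Fintype.card_fun, Fintype.card_set, ← pow_mul, hsummary, hcolor]
  congr 1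
  ring

variable (M)

/-- A word with the same profile as `x` and at least `N` letters, if there is one. -/
def pump (x : List I) (N : ℕ) : List I :=
  Classical.epsilon fun x' => N ≤ x'.length ∧ M.profile x' = M.profile x

/-- A completion of the input word `x` by output letters whose run from `q` has summary `s`, if
there is one. -/
def completion (q : Q) (s : M.Summary) (x : List I) : List (I × O) :=
  Classical.epsilon fun z => z.map Prod.fst = x ∧ M.summarize q z = s

variable {M}

theorem pump_spec [Fintype Q] {x : List I} (hx : Fintype.card M.Profile ≤ x.length) (N : ℕ) :
    N ≤ (M.pump x N).length ∧ M.profile (M.pump x N) = M.profile x :=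
  Classical.epsilon_spec (exists_le_length_eval_eq M.profileDFA hx N)

theorem completion_spec {x : List I} {q : Q} {s : M.Summary} (h : s ∈ M.profile x q) :
    (M.completion q s x).map Prod.fst = x ∧ M.summarize q (M.completion q s x) = s :=
  Classical.epsilon_spec (mem_profile_iff.1 h)

end Profile

section Pumping

variable {I O : Type} (M : PACost Q (I × O)) (F : ℕ → ℕ) (d : ℕ) (α : ℕ → I)

/-- The position at which the `i`-th block starts once the blocks of length `d` of `α` have been
pumped. -/
def pumpStart : ℕ → ℕ
  | 0 => 0
  | i + 1 => pumpStart i + (M.pump (seg α (i * d) ((i + 1) * d)) (F (pumpStart i) + 1)).length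

/-- The `i`-th block of length `d` of `α`, pumped so that it exceeds the lookahead `F` needed at
its start. -/
def pumpBlock (i : ℕ) : List I :=
  M.pump (seg α (i * d) ((i + 1) * d)) (F (M.pumpStart F d α i) + 1)

variable {M F d α} {α' : ℕ → I} {i : ℕ}

theorem blockStart_pumpBlock : blockStart (M.pumpBlock F d α) = M.pumpStart F d α := by
  funext i
  induction i with
  | zero => rfl
  | succ i ih => rw [blockStart_succ, ih, pumpBlock, pumpStart]

theorem pumpStart_congr (h : Set.EqOn α α' (Set.Iio (i * d))) :
    M.pumpStart F d α i = M.pumpStart F d α' i := by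
  induction i with
  | zero => rfl
  | succ i ih =>
    have hle : i * d ≤ (i + 1) * d := Nat.mul_le_mul_right d i.le_succ
    rw [pumpStart, pumpStart, ih (h.mono (Set.Iio_subset_Iio hle)),
      seg_eq_seg_iff.2 (h.mono Set.Ico_subset_Iio_self)]

theorem pumpBlock_congr (h : Set.EqOn α α' (Set.Iio ((i + 1) * d))) :
    M.pumpBlock F d α i = M.pumpBlock F d α' i := by
  have hle : i * d ≤ (i + 1) * d := Nat.mul_le_mul_right d i.le_succ
  rw [pumpBlock, pumpBlock, pumpStart_congr (h.mono (Set.Iio_subset_Iio hle)),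
    seg_eq_seg_iff.2 (h.mono Set.Ico_subset_Iio_self)]

variable [Fintype Q]

theorem lt_length_pumpBlock (hd : Fintype.card M.Profile ≤ d) (α : ℕ → I) (i : ℕ) :
    F (M.pumpStart F d α i) < (M.pumpBlock F d α i).length :=
  (pump_spec (by simpa [Nat.succ_mul] using hd) _).1

theorem profile_pumpBlock (hd : Fintype.card M.Profile ≤ d) (α : ℕ → I) (i : ℕ) :
    M.profile (M.pumpBlock F d α i) = M.profile (seg α (i * d) ((i + 1) * d)) :=
  (pump_spec (by simpa [Nat.succ_mul] using hd) _).2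

theorem length_pumpBlock_pos (hd : Fintype.card M.Profile ≤ d) (α : ℕ → I) (i : ℕ) :
    0 < (M.pumpBlock F d α i).length :=
  Nat.zero_lt_of_lt (lt_length_pumpBlock hd α i)

theorem strictMono_pumpStart (hd : Fintype.card M.Profile ≤ d) (α : ℕ → I) :
    StrictMono (M.pumpStart F d α) :=
  blockStart_pumpBlock (M := M) ▸ strictMono_blockStart (length_pumpBlock_pos hd α)

end Pumping

section Response

variable {I O : Type} [Inhabited I] (M : PACost Q (I × O)) (F : ℕ → ℕ) (d : ℕ)
  (σ : (ℕ → I) → ℕ → O) (α : ℕ → I)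

/-- The input word obtained from `α` by pumping its blocks of length `d`. -/
def pumpedWord : ℕ → I := flatWord (M.pumpBlock F d α)

/-- The outcome of playing `σ` against the pumped input word. -/
def pumpedPlay (n : ℕ) : I × O := (M.pumpedWord F d α n, σ (M.pumpedWord F d α) n)

/-- The `i`-th block of length `d` of `α`, completed so as to have the summary of the corresponding
block of the pumped play. -/
def responseBlock (i : ℕ) : List (I × O) :=
  M.completion (M.stateAt M.qI (M.pumpedPlay F d σ α) (M.pumpStart F d α i))
    (M.blockSummary M.qI (M.pumpedPlay F d σ α) (M.pumpStart F d α) i)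
    (seg α (i * d) ((i + 1) * d))

/-- The word `α` together with the letters with which Player O completes its blocks. -/
def responseWord [Inhabited O] : ℕ → I × O := flatWord (M.responseBlock F d σ α)

variable {M F d σ α} {α' : ℕ → I} {i : ℕ} [Fintype Q]

theorem pumpedWord_congr (hd : Fintype.card M.Profile ≤ d)
    (h : Set.EqOn α α' (Set.Iio (i * d))) :
    Set.EqOn (M.pumpedWord F d α) (M.pumpedWord F d α') (Set.Iio (M.pumpStart F d α i)) := by
  rw [← blockStart_pumpBlock]
  exact eqOn_flatWord (length_pumpBlock_pos hd α) (length_pumpBlock_pos hd α') fun j hj =>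
    pumpBlock_congr (h.mono (Set.Iio_subset_Iio (Nat.mul_le_mul_right d hj)))

theorem pumpedPlay_congr (hd : Fintype.card M.Profile ≤ d) (hF : Monotone F)
    (hσ : IsCausal F σ) (h : Set.EqOn α α' (Set.Iio ((i + 1) * d))) :
    Set.EqOn (M.pumpedPlay F d σ α) (M.pumpedPlay F d σ α') (Set.Iio (M.pumpStart F d α i)) := by
  intro p hp
  have hword := pumpedWord_congr (F := F) hd h
  have hFp : F p ≤ M.pumpStart F d α (i + 1) := calc
    F p ≤ F (M.pumpStart F d α i) := hF (Set.mem_Iio.1 hp).le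
    _ ≤ (M.pumpBlock F d α i).length := (lt_length_pumpBlock hd α i).le
    _ ≤ M.pumpStart F d α (i + 1) := Nat.le_add_left ..
  have hp' : p < M.pumpStart F d α (i + 1) :=
    (Set.mem_Iio.1 hp).trans (strictMono_pumpStart hd α i.lt_succ_self)
  exact Prod.ext (hword hp') (hσ (hword.mono (Set.Iio_subset_Iio hFp)))

theorem responseBlock_congr (hd : Fintype.card M.Profile ≤ d) (hF : Monotone F)
    (hσ : IsCausal F σ) (h : Set.EqOn α α' (Set.Iio ((i + 2) * d))) :
    M.responseBlock F d σ α i = M.responseBlock F d σ α' i := by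
  have hplay := pumpedPlay_congr (i := i + 1) hd hF hσ h
  have hsucc : Set.EqOn α α' (Set.Iio ((i + 1) * d)) :=
    h.mono (Set.Iio_subset_Iio (Nat.mul_le_mul_right d (i + 1).le_succ))
  have hi : Set.EqOn α α' (Set.Iio (i * d)) :=
    hsucc.mono (Set.Iio_subset_Iio (Nat.mul_le_mul_right d i.le_succ))
  have hle : M.pumpStart F d α i ≤ M.pumpStart F d α (i + 1) :=
    (strictMono_pumpStart hd α i.lt_succ_self).le
  rw [responseBlock, responseBlock, blockSummary, blockSummary, ← pumpStart_congr hi,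
    ← pumpStart_congr hsucc, stateAt_congr (hplay.mono (Set.Iio_subset_Iio hle)),
    segSummary_congr hle hplay, seg_eq_seg_iff.2 (hsucc.mono Set.Ico_subset_Iio_self)]

theorem blockSummary_pumpedPlay_mem_profile (hd : Fintype.card M.Profile ≤ d) (i : ℕ) :
    M.blockSummary M.qI (M.pumpedPlay F d σ α) (M.pumpStart F d α) i ∈
      M.profile (seg α (i * d) ((i + 1) * d))
        (M.stateAt M.qI (M.pumpedPlay F d σ α) (M.pumpStart F d α i)) := by
  rw [← profile_pumpBlock (F := F) hd, mem_profile_iff]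
  refine ⟨_, ?_, rfl⟩
  rw [map_seg, ← blockStart_pumpBlock]
  exact seg_flatWord (length_pumpBlock_pos hd α) i

theorem map_fst_responseBlock (hd : Fintype.card M.Profile ≤ d) (i : ℕ) :
    (M.responseBlock F d σ α i).map Prod.fst = seg α (i * d) ((i + 1) * d) :=
  (completion_spec (blockSummary_pumpedPlay_mem_profile hd i)).1

theorem summarize_responseBlock (hd : Fintype.card M.Profile ≤ d) (i : ℕ) :
    M.summarize (M.stateAt M.qI (M.pumpedPlay F d σ α) (M.pumpStart F d α i))
        (M.responseBlock F d σ α i) =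
      M.blockSummary M.qI (M.pumpedPlay F d σ α) (M.pumpStart F d α) i :=
  (completion_spec (blockSummary_pumpedPlay_mem_profile hd i)).2

theorem length_responseBlock (hd : Fintype.card M.Profile ≤ d) (i : ℕ) :
    (M.responseBlock F d σ α i).length = d := by
  rw [← List.length_map Prod.fst, map_fst_responseBlock hd, length_seg, Nat.succ_mul,
    Nat.add_sub_cancel_left]

theorem blockStart_responseBlock (hd : Fintype.card M.Profile ≤ d) :
    blockStart (M.responseBlock F d σ α) = fun i => i * d := by
  funext i
  simp [blockStart, length_responseBlock hd]

theorem length_responseBlock_pos (hd : Fintype.card M.Profile ≤ d) (i : ℕ) :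
    0 < (M.responseBlock F d σ α i).length :=
  (Fintype.card_pos.trans_le hd).trans_eq (length_responseBlock hd i).symm

variable [Inhabited O]

theorem seg_responseWord (hd : Fintype.card M.Profile ≤ d) (i : ℕ) :
    seg (M.responseWord F d σ α) (i * d) ((i + 1) * d) = M.responseBlock F d σ α i := by
  have hseg := seg_flatWord (length_responseBlock_pos (F := F) (σ := σ) (α := α) hd) i
  rwa [blockStart_responseBlock hd] at hseg

theorem fst_responseWord (hd : Fintype.card M.Profile ≤ d) (n : ℕ) :
    (M.responseWord F d σ α n).1 = α n := by
  have hpos : 0 < d := Fintype.card_pos.trans_le hd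
  obtain ⟨i, hi⟩ := exists_mem_Ico_succ (strictMono_mul_right_of_pos hpos) (zero_mul d) n
  have hseg : seg (Prod.fst ∘ M.responseWord F d σ α) (i * d) ((i + 1) * d) =
      seg α (i * d) ((i + 1) * d) := by
    rw [← map_seg, seg_responseWord hd, map_fst_responseBlock hd]
  exact seg_eq_seg_iff.1 hseg hi

theorem responseWord_congr (hd : Fintype.card M.Profile ≤ d) (hF : Monotone F)
    (hσ : IsCausal F σ) (h : Set.EqOn α α' (Set.Iio ((i + 1) * d))) :
    Set.EqOn (M.responseWord F d σ α) (M.responseWord F d σ α') (Set.Iio (i * d)) := by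
  have heq := eqOn_flatWord (length_responseBlock_pos hd) (length_responseBlock_pos hd) fun j hj =>
    responseBlock_congr hd hF hσ
      (h.mono (Set.Iio_subset_Iio (Nat.mul_le_mul_right d (Nat.succ_le_succ hj))))
  rwa [blockStart_responseBlock hd] at heq

theorem isCausal_snd_responseWord (hd : Fintype.card M.Profile ≤ d) (hF : Monotone F)
    (hσ : IsCausal F σ) :
    IsCausal (fun n => 2 * d + n) fun α n => (M.responseWord F d σ α n).2 := by
  intro α α' n h
  have hpos : 0 < d := Fintype.card_pos.trans_le hd
  obtain ⟨i, hi⟩ := exists_mem_Ico_succ (strictMono_mul_right_of_pos hpos) (zero_mul d) n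
  refine congrArg Prod.snd (responseWord_congr (i := i + 1) hd hF hσ (h.mono ?_) hi.2)
  exact Set.Iio_subset_Iio (by linarith [hi.1])

theorem accepting_responseWord (hd : Fintype.card M.Profile ≤ d)
    (h : M.Accepting M.qI (M.pumpedPlay F d σ α)) :
    M.Accepting M.qI (M.responseWord F d σ α) :=
  accepting_of_blockwise_summary_eq (strictMono_pumpStart hd α) rfl
    (strictMono_mul_right_of_pos (Fintype.card_pos.trans_le hd)) (zero_mul d)
    (fun i => (Nat.succ_mul i d).le)
    (fun i => by rw [seg_responseWord hd, summarize_responseBlock hd]) h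

end Response

theorem oWins_of_card_profile_le {I O : Type} [Fintype Q] [Inhabited I] {M : PACost Q (I × O)}
    {d : ℕ} (hd : Fintype.card M.Profile ≤ d) {f : ℕ → ℕ} (hf : DelayFn f) (h : OWins f M.Lang) :
    OWins (fun i => if i = 0 then 2 * d else 1) M.Lang := by
  obtain ⟨σ, hσ, hwin⟩ := exists_isCausal_of_oWins hf h
  have : Inhabited O := ⟨σ default 0⟩
  have hpos : 0 < d := Fintype.card_pos.trans_le hd
  have hlookahead (n : ℕ) : lookahead (fun i => if i = 0 then 2 * d else 1) n = 2 * d + n := by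
    simp [lookahead, Finset.sum_range_succ', add_comm]
  refine oWins_of_isCausal (σ := fun α n => (M.responseWord (lookahead f) d σ α n).2) ?_ ?_ ?_
  · intro i
    dsimp only
    split_ifs <;> omega
  · rw [funext hlookahead]
    exact isCausal_snd_responseWord hd (strictMono_lookahead hf).monotone hσ
  · intro α
    have hplay := accepting_responseWord hd (hwin (M.pumpedWord (lookahead f) d α))
    have hword : (fun n => (α n, (M.responseWord (lookahead f) d σ α n).2)) =
        M.responseWord (lookahead f) d σ α :=
      funext fun n => Prod.ext (fst_responseWord hd n).symm rfl
    exact hword ▸ hplay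

theorem accepting_of_subsingleton [Subsingleton Q] (h : M.Accepting q w) : M.Accepting q w' := by
  simp only [accepting_iff_exists_cor_le, cor_le_iff] at h ⊢
  obtain ⟨b, N, h⟩ := h
  refine ⟨b, N, fun p hp hodd => ?_⟩
  rw [Subsingleton.elim (M.stateAt q w' p) (M.stateAt q w p)] at hodd
  obtain ⟨p', -, -, hlt, -⟩ := h p hp hodd
  exact absurd hlt (by rw [Subsingleton.elim (M.stateAt q w p')]; exact lt_irrefl _)

theorem oWins_of_subsingleton {I O : Type} [Subsingleton Q] [Inhabited I] {M : PACost Q (I × O)}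
    {f g : ℕ → ℕ} (hf : DelayFn f) (hg : DelayFn g) (h : OWins f M.Lang) : OWins g M.Lang := by
  obtain ⟨σ, -, hwin⟩ := exists_isCausal_of_oWins hf h
  exact oWins_of_isCausal (σ := fun _ n => σ default n) hg (fun _ _ _ _ => rfl) fun _ =>
    accepting_of_subsingleton (hwin default)

end PACost

theorem statement5_general {Q I O : Type} [Fintype Q] [Inhabited I] (M : PACost Q (I × O))
    (n k : ℕ) (hn : Fintype.card Q = n) (hk : (Finset.univ.image M.Ω).card = k)
    (h : ∃ f : ℕ → ℕ, DelayFn f ∧ OWins f M.Lang) :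
    OWins (fun i => if i = 0 then 2 ^ (2 * n ^ 4 * k ^ 2 + 1) else 1) M.Lang := by
  obtain ⟨f, hf, h⟩ := h
  rcases subsingleton_or_nontrivial Q with hQ | hQ
  · refine PACost.oWins_of_subsingleton hf (fun i => ?_) h
    split_ifs <;> positivity
  · have hn2 : 2 ≤ n := hn ▸ Fintype.one_lt_card
    have hk1 : 1 ≤ k := hk ▸ (Finset.univ_nonempty.image M.Ω).card_pos
    have hcard : Fintype.card M.Profile ≤ 2 ^ (2 * n ^ 4 * k ^ 2) := by
      rw [PACost.card_profile, hn, hk, mul_assoc, mul_assoc]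
      exact Nat.pow_le_pow_right two_pos (Nat.mul_le_mul_left 2 (sq_mul_succ_sq_le hn2 hk1))
    simpa only [pow_succ'] using PACost.oWins_of_card_profile_le hcard hf h

/-- Corollary 2, upper bound on the lookahead. If Player O wins
`Γ_f(L(A))` for some delay function `f`, then she also wins it for the constant delay
function with `f 0 = 2^(2n⁴k²+1)`. -/
theorem statement5 {Q I O : Type} [Fintype Q] [Fintype I] [Fintype O] [Inhabited I]
    (M : PACost Q (I × O)) (n k : ℕ)
    (hn : Fintype.card Q = n) (hk : (Finset.univ.image M.Ω).card = k)
    (he : ∃ q, Even (M.Ω q)) (ho : ∃ q, Odd (M.Ω q))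
    (h : ∃ f : ℕ → ℕ, DelayFn f ∧ OWins f M.Lang) :
    OWins (fun i => if i = 0 then 2 ^ (2 * n ^ 4 * k ^ 2 + 1) else 1) M.Lang :=
  statement5_general M n k hn hk h
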